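/- Let R be a commutative ring, m ≥ 0 and n ≥ 1. Then the ring M_n E^m satisfies the standard identity of degree 2(⌊(n²+1)/2⌋ + ⌊m/2⌋); that is, for k = 2(⌊(n²+1)/2⌋ + ⌊m/2⌋) and all A₁,…,A_k ∈ M_n E^m, Σ_{π ∈ 𝔖_k} sign(π) A_{π(1)} ⋯ A_{π(k)} = 0. -/

import Mathlib

/-!
Expand the arguments of `s_k` over products `w • e_p` of a homogeneous scalar `w` and a member of a
basis of matrix units in which one unit `e_oo` is replaced by `1`. In a nonzero value, the total
degree is at most `m`, so at most `m` of the scalars have odd degree. The others are central, so the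
corresponding `e_p` are distinct, as `s_k` is alternating, and differ from `1`, as `s_k` of even
degree kills central arguments. Hence `k ≤ (n² - 1) + m`, which contradicts the choice of `k` except
when `n` is even and `m` odd.

In that case the total degree is odd and every `e_q ≠ 1` is proportional to an argument `A_j` with a
central factor. It suffices that `tr (e_q s_k(A)) = 0` for all `q`. Because of the odd total degree,
rotating a word does not change its trace. So `tr s_k(A) = 0`, a rotation of an even number of
letters being an odd permutation. If `e_q` is proportional to `A_j`, the words `e_q u A_j v` and
`e_q v A_j u` have equal traces but, there being `k + 1` letters in all, opposite signs.
-/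

namespace StandardIdentity

open Equiv Finset

section Multilinear

variable {R ι : Type*} [Semiring R]

theorem multilinearMap_ext_of_span_eq_top {M : ι → Type*} {N : Type*} [∀ i, AddCommMonoid (M i)]
    [AddCommMonoid N] [∀ i, Module R (M i)] [Module R N] [Finite ι] {f g : MultilinearMap R M N}
    {T : ∀ i, Set (M i)} (hT : ∀ i, Submodule.span R (T i) = ⊤)
    (h : ∀ v, (∀ i, v i ∈ T i) → f v = g v) : f = g := by
  classical
  have := Fintype.ofFinite ι
  have agree_off : ∀ (s : Finset ι) (v : ∀ i, M i), (∀ i ∉ s, v i ∈ T i) → f v = g v := by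
    intro s
    induction s using Finset.induction_on with
    | empty => exact fun v hv => h v fun i => hv i (notMem_empty i)
    | insert a s ha ih =>
      intro v hv
      have agree_update (x : M a) (hx : x ∈ T a) :
          f.toLinearMap v a x = g.toLinearMap v a x := by
        refine ih _ fun i hi => ?_
        rcases eq_or_ne i a with rfl | hia
        · simpa using hx
        · simpa [hia] using hv i (by simp [hia, hi])
      simpa using LinearMap.congr_fun (LinearMap.ext_on (hT a) agree_update) (v a)
  ext v
  exact agree_off univ v fun i hi => absurd (mem_univ i) hi

theorem multilinearMap_comp_swap_of_eq_smul {M N : Type*} [AddCommMonoid M] [AddCommMonoid N]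
    [Module R M] [Module R N] [DecidableEq ι] (f : MultilinearMap R (fun _ : ι => M) N)
    (v : ι → M) {i j : ι} {c : R} (h : v j = c • v i) : f (v ∘ swap i j) = f v := by
  rcases eq_or_ne i j with rfl | hij
  · simp
  set u := Function.update v j (v i) with hu
  have hui : u i = v i := by simp [hu, hij]
  have hv : v = Function.update u j (c • u j) := by simp [hu, ← h]
  have hswap : v ∘ swap i j = Function.update u i (c • u i) := by
    rw [comp_swap_eq_update, h, hui]
  have map_smul_u (l : ι) : f (Function.update u l (c • u l)) = c • f u := by
    rw [f.map_update_smul, Function.update_eq_self]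
  rw [hswap, map_smul_u, ← map_smul_u j, ← hv]

end Multilinear

theorem alternatingMap_eq_zero_of_eq_smul {R ι M N : Type*} [Semiring R] [AddCommMonoid M]
    [AddCommMonoid N] [Module R M] [Module R N] (f : M [⋀^ι]→ₗ[R] N) (v : ι → M) {i j : ι}
    (hij : i ≠ j) {b : M} {c c' : R} (hi : v i = c • b) (hj : v j = c' • b) : f v = 0 := by
  classical
  have hv : v = Function.update (Function.update v i (c • b)) j (c' • b) := by
    simp [← hi, ← hj]
  rw [hv, f.map_update_smul, Function.update_comm hij, f.map_update_smul,
    f.map_eq_zero_of_eq _ _ hij, smul_zero, smul_zero]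
  simp [hij.symm]

section Perm

variable {G : Type*} [AddCommGroup G] {k : ℕ}

theorem sum_perm_eq_zero_of_even (hk : Even k) (F : Perm (Fin k) → G) (i : Fin k)
    (h : ∀ p q : Fin k, (q : ℕ) = p + 1 →
      ∃ τ : Perm (Fin k), τ p = q ∧ ∀ π, π q = i → F (π * τ) = -F π) :
    ∑ π, F π = 0 := by
  obtain ⟨l, rfl⟩ : ∃ l, k = l + 1 := Nat.exists_eq_succ_of_ne_zero i.pos.ne'
  -- Sorted by the position of `i`, the partial sums alternate in sign over evenly many positions.
  set T : Fin (l + 1) → G := fun p => ∑ π with π p = i, F π with hT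
  have T_succ (p : Fin l) : T p.succ = -T p.castSucc := by
    obtain ⟨τ, hτ, hF⟩ := h p.castSucc p.succ rfl
    simp only [hT, sum_filter]
    rw [← Equiv.sum_comp (Equiv.mulRight τ) fun π => if π p.castSucc = i then F π else 0,
      ← sum_neg_distrib]
    refine sum_congr rfl fun π _ => ?_
    by_cases hπ : π p.succ = i <;> simp [hτ, hπ, hF]
  have T_eq (p : Fin (l + 1)) : T p = (-1 : ℤ) ^ (p : ℕ) • T 0 := by
    induction p using Fin.induction with
    | zero => simp
    | succ p ih => rw [T_succ, ih, Fin.val_succ, pow_succ', neg_one_mul, neg_smul]; rfl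
  calc ∑ π, F π = ∑ p, T p := by
        rw [← sum_fiberwise univ (fun π : Perm (Fin (l + 1)) => π.symm i) F]
        simp only [hT, Equiv.symm_apply_eq, eq_comm (a := i)]
    _ = (∑ p ∈ range (l + 1), (-1 : ℤ) ^ p) • T 0 := by
        rw [← Fin.sum_univ_eq_sum_range (fun p => (-1 : ℤ) ^ p), sum_smul]
        exact sum_congr rfl fun p _ => T_eq p
    _ = 0 := by rw [neg_one_geom_sum, if_pos hk, zero_smul]

theorem finRotate_pow_val_apply (j i : Fin k) : (finRotate k ^ (j : ℕ)) i = i + j := by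
  rw [← finCycle_apply, finCycle_eq_finRotate_iterate, Perm.iterate_eq_pow]

theorem sum_stabilizer_sign_smul_eq_zero (hk : Even k) {j : Fin (k + 1)} (hj : j ≠ 0)
    (f : Perm (Fin (k + 1)) → G) (hrot : ∀ π, f (π * finRotate (k + 1)) = f π)
    (hswap : ∀ π, f (swap 0 j * π) = f π) :
    ∑ π with π 0 = 0, (Perm.sign π : ℤ) • f π = 0 := by
  have hrot_pow (a : ℕ) (π : Perm (Fin (k + 1))) : f (π * finRotate (k + 1) ^ a) = f π := by
    induction a with
    | zero => simp
    | succ a ih => rw [pow_succ, ← mul_assoc, hrot, ih]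
  let φ (π : Perm (Fin (k + 1))) : Perm (Fin (k + 1)) :=
    swap 0 j * π * finRotate (k + 1) ^ (π.symm j : ℕ)
  have φ_apply (π : Perm (Fin (k + 1))) (i : Fin (k + 1)) :
      φ π i = swap 0 j (π (i + π.symm j)) := by
    simp only [φ, Perm.mul_apply, finRotate_pow_val_apply]
  have sign_φ (π : Perm (Fin (k + 1))) : Perm.sign (φ π) = -Perm.sign π := by
    simp [φ, Perm.sign_swap hj.symm, hk.neg_one_pow]
  have f_φ (π : Perm (Fin (k + 1))) : f (φ π) = f π := by rw [hrot_pow, hswap]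
  have φ_symm {π : Perm (Fin (k + 1))} (hπ : π 0 = 0) : (φ π).symm j = -π.symm j := by
    rw [Equiv.symm_apply_eq, φ_apply, neg_add_cancel, hπ, swap_apply_left]
  -- Reading `π` as a cyclic word, `φ` exchanges the two words around `j`: `0 u j v ↦ 0 v j u`.
  refine sum_involution (fun π _ => φ π) ?_ ?_ ?_ ?_
  · intro π _
    rw [sign_φ, f_φ, Units.val_neg, neg_smul, add_neg_cancel]
  · intro π _ _ hfix
    exact units_ne_neg_self _ ((congrArg Perm.sign hfix).symm.trans (sign_φ π))
  · intro π _
    simp [φ_apply]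
  · intro π hπ
    ext i
    rw [φ_apply, φ_symm (mem_filter.1 hπ).2, φ_apply, neg_add_cancel_right, swap_apply_self]

theorem sum_decomposeFin_symm_zero (F : Perm (Fin (k + 1)) → G) :
    ∑ e : Perm (Fin k), F (Perm.decomposeFin.symm (0, e)) = ∑ π with π 0 = 0, F π := by
  rw [sum_filter, ← Equiv.sum_comp Perm.decomposeFin.symm, Fintype.sum_prod_type,
    Fintype.sum_eq_single (0 : Fin (k + 1)) fun p hp => by simp [hp]]
  simp

end Perm

theorem prod_ofFn_comp_swap_of_commute {S : Type*} [Monoid S] {k : ℕ} (f : Fin k → S)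
    {i j : Fin k} (hij : (j : ℕ) = i + 1) (h : Commute (f i) (f j)) :
    (List.ofFn (f ∘ swap i j)).prod = (List.ofFn f).prod := by
  induction k with
  | zero => exact i.elim0
  | succ k ih =>
    obtain ⟨j, rfl⟩ := Fin.exists_succ_eq.2 (show j ≠ 0 by rintro rfl; simp at hij)
    cases i using Fin.cases with
    | zero =>
      obtain ⟨l, rfl⟩ : ∃ l, k = l + 1 := Nat.exists_eq_succ_of_ne_zero j.pos.ne'
      obtain rfl : j = 0 := by ext; simpa using hij
      have hne (x : Fin l) : swap (0 : Fin (l + 2)) (Fin.succ 0) x.succ.succ = x.succ.succ :=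
        swap_apply_of_ne_of_ne (Fin.succ_ne_zero _)
          ((Fin.succ_injective _).ne (Fin.succ_ne_zero _))
      simp only [List.ofFn_succ, List.prod_cons, Function.comp_apply, swap_apply_left,
        swap_apply_right, hne]
      rw [← mul_assoc, ← mul_assoc, h.eq]
    | succ i =>
      have hshift (x : Fin k) : swap i.succ j.succ x.succ = (swap i j x).succ :=
        (Fin.succ_injective k).swap_apply i j x
      have hzero : swap i.succ j.succ 0 = 0 :=
        swap_apply_of_ne_of_ne (Fin.succ_ne_zero _).symm (Fin.succ_ne_zero _).symm
      simp only [List.ofFn_succ, List.prod_cons, Function.comp_apply, hshift, hzero]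
      exact congrArg _ (ih (fun x => f x.succ) (by simpa using hij) h)

section StandardPoly

variable {S : Type*} [Ring S] {k : ℕ}

/-- The standard polynomial `s_k(A₀, …, A_{k-1})` of degree `k`. -/
def standardPoly (A : Fin k → S) : S :=
  ∑ π : Perm (Fin k), (Perm.sign π : ℤ) • (List.ofFn fun i => A (π i)).prod

variable (Z S k) in
/-- The standard polynomial of degree `k` as an alternating map. The scalars `Z` are a parameter,
because the arguments are expanded over `ℤ` but compared over the centre of the coefficient ring. -/
def standardAlternatingMap (Z : Type*) [CommRing Z] [Algebra Z S] : S [⋀^Fin k]→ₗ[Z] S :=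
  MultilinearMap.alternatization (MultilinearMap.mkPiAlgebraFin Z k S)

theorem standardAlternatingMap_apply (Z : Type*) [CommRing Z] [Algebra Z S] (A : Fin k → S) :
    standardAlternatingMap S k Z A = standardPoly A := by
  simp [standardAlternatingMap, standardPoly, MultilinearMap.alternatization_apply, Units.smul_def]

theorem standardPoly_eq_zero_of_eq_smul {Z : Type*} [CommRing Z] [Algebra Z S] (A : Fin k → S)
    {i j : Fin k} (hij : i ≠ j) {b : S} {c c' : Z} (hi : A i = c • b) (hj : A j = c' • b) :
    standardPoly A = 0 := by
  rw [← standardAlternatingMap_apply Z, alternatingMap_eq_zero_of_eq_smul _ A hij hi hj]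

theorem standardPoly_eq_zero_of_forall_commute (hk : Even k) (A : Fin k → S) {i : Fin k}
    (hi : ∀ j, Commute (A i) (A j)) : standardPoly A = 0 := by
  refine sum_perm_eq_zero_of_even hk _ i fun p q hpq => ⟨swap p q, swap_apply_left p q, ?_⟩
  intro π hπ
  have hne : p ≠ q := by rintro rfl; omega
  have hprod := prod_ofFn_comp_swap_of_commute (fun l => A (π l)) hpq (hπ ▸ (hi _).symm)
  rw [Perm.sign_mul, Perm.sign_swap hne, mul_neg_one, Units.val_neg, neg_smul, ← hprod]
  rfl

end StandardPoly

section Trace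

variable {n S : Type*} [Fintype n] [Semiring S]

theorem eq_zero_of_forall_trace_mul_eq_zero {T : Set (Matrix n n S)}
    (hT : Submodule.span S T = ⊤) {X : Matrix n n S} (h : ∀ Y ∈ T, (Y * X).trace = 0) :
    X = 0 := by
  refine Matrix.ext_iff_trace_mul_left.2 fun Y => ?_
  rw [mul_zero, Matrix.trace_zero]
  induction (hT ▸ Submodule.mem_top : Y ∈ Submodule.span S T) using Submodule.span_induction with
  | mem Y hY => exact h Y hY
  | zero => simp
  | add Y Y' _ _ hY hY' => rw [add_mul, Matrix.trace_add, hY, hY', add_zero]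
  | smul c Y _ hY => rw [smul_mul_assoc, Matrix.trace_smul, hY, smul_zero]

theorem trace_mul_comm_of_forall_commute {X Y : Matrix n n S}
    (h : ∀ i j, Commute (X i j) (Y j i)) : (X * Y).trace = (Y * X).trace := by
  simp only [Matrix.trace, Matrix.diag, Matrix.mul_apply, (h _ _).eq]
  exact sum_comm

end Trace

section MatrixUnits

variable {n : Type*} [DecidableEq n]

/-- The matrix units, with the unit at `(o, o)` replaced by the identity matrix. They still span the
matrix ring, and now one of them is central. -/
def unitalSingle (S : Type*) [Ring S] (o : n) (p : n × n) : Matrix n n S :=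
  if p = (o, o) then 1 else Matrix.single p.1 p.2 1

variable {S : Type*} [Ring S] {o : n}

theorem unitalSingle_self : unitalSingle S o (o, o) = 1 := if_pos rfl

theorem unitalSingle_of_ne {p : n × n} (hp : p ≠ (o, o)) :
    unitalSingle S o p = Matrix.single p.1 p.2 1 := if_neg hp

variable (S o) in
theorem span_range_unitalSingle [Finite n] :
    Submodule.span S (Set.range (unitalSingle S o)) = ⊤ := by
  have := Fintype.ofFinite n
  set V := Submodule.span S (Set.range (unitalSingle S o))
  have unitalSingle_mem (p : n × n) : unitalSingle S o p ∈ V := Submodule.subset_span ⟨p, rfl⟩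
  have single_mem_of_ne {p : n × n} (hp : p ≠ (o, o)) : Matrix.single p.1 p.2 (1 : S) ∈ V :=
    unitalSingle_of_ne (S := S) hp ▸ unitalSingle_mem p
  have single_self_mem : Matrix.single o o (1 : S) ∈ V := by
    have hsum : ∑ i : n, Matrix.single i i (1 : S) = 1 := Matrix.sum_single_one
    rw [← add_sum_erase _ _ (mem_univ o), ← unitalSingle_self (o := o)] at hsum
    rw [eq_sub_of_add_eq hsum]
    exact sub_mem (unitalSingle_mem _)
      (sum_mem fun i hi => single_mem_of_ne (p := (i, i)) (by simpa using hi))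
  refine eq_top_iff.2 fun X _ => ?_
  rw [Matrix.matrix_eq_sum_single X]
  refine sum_mem fun i _ => sum_mem fun j _ => ?_
  have hsmul : Matrix.single i j (X i j) = X i j • Matrix.single i j (1 : S) := by simp
  rw [hsmul]
  refine V.smul_mem _ ?_
  by_cases hij : (i, j) = (o, o)
  · obtain ⟨rfl, rfl⟩ := Prod.mk.inj hij
    exact single_self_mem
  · exact single_mem_of_ne hij

end MatrixUnits

theorem card_add_card_le_card_add_sum_of_injOn_even {ι α : Type*} [Fintype ι] [Fintype α]
    {p : ι → α} {d : ι → ℕ} (hp : Set.InjOn p {i | Even (d i)}) {t : Finset α}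
    (ht : ∀ i, Even (d i) → p i ∉ t) :
    Fintype.card ι + #t ≤ Fintype.card α + ∑ i, d i := by
  classical
  have hdisj : Disjoint (({i | Even (d i)} : Finset ι).image p) t := by
    simpa [disjoint_left] using ht
  have hinj : #(({i | Even (d i)} : Finset ι).image p) = #{i | Even (d i)} :=
    card_image_of_injOn (by simpa using hp)
  have heven : #{i | Even (d i)} + #t ≤ Fintype.card α := by
    rw [← hinj, ← card_union_of_disjoint hdisj]
    exact card_le_univ _
  have hodd : #{i | ¬Even (d i)} ≤ ∑ i, d i := by
    rw [card_filter]
    refine sum_le_sum fun i _ => ?_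
    split_ifs with hi
    exacts [Nat.zero_le _, (Nat.not_even_iff_odd.1 hi).pos]
  have hsplit : #{i | Even (d i)} + #{i | ¬Even (d i)} = Fintype.card ι :=
    card_filter_add_card_filter_not _
  omega

theorem card_add_card_insert_le_of_standardPoly_ne_zero {S n : Type*} [Ring S] [Fintype n]
    [DecidableEq n] {k : ℕ} (hk : Even k) {o : n} {d : Fin k → ℕ} {w : Fin k → S}
    (hw : ∀ i, Even (d i) → w i ∈ Subring.center S) {p : Fin k → n × n}
    (hne : standardPoly (fun i => w i • unitalSingle S o (p i)) ≠ 0) {t : Finset (n × n)}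
    (ht : ∀ i, Even (d i) → p i ∉ t) :
    k + #(insert (o, o) t) ≤ Fintype.card n ^ 2 + ∑ i, d i := by
  have hinj : Set.InjOn p {i | Even (d i)} := fun i hi j hj hij => by
    by_contra hij'
    exact hne (standardPoly_eq_zero_of_eq_smul (Z := Subring.center S) _ hij'
      (c := ⟨w i, hw i hi⟩) (c' := ⟨w j, hw j hj⟩) rfl (hij ▸ rfl))
  have p_ne (i : Fin k) (hi : Even (d i)) : p i ≠ (o, o) := fun hpi => by
    refine hne (standardPoly_eq_zero_of_forall_commute hk _ (i := i) fun j => ?_)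
    rw [hpi, unitalSingle_self]
    exact (Commute.one_left _).smul_left (⟨w i, hw i hi⟩ : Subring.center S)
  have ht_insert (i : Fin k) (hi : Even (d i)) : p i ∉ insert (o, o) t := by
    simp [p_ne i hi, ht i hi]
  simpa [sq] using card_add_card_le_card_add_sum_of_injOn_even hinj ht_insert

section Graded

variable {E σ : Type*} [Ring E] [SetLike σ E] [AddSubmonoidClass σ E]

theorem span_int_isHomogeneousElem (𝒜 : ℕ → σ) [GradedRing 𝒜] :
    Submodule.span ℤ {w | SetLike.IsHomogeneousElem 𝒜 w} = ⊤ := by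
  refine eq_top_iff.2 fun w _ => ?_
  induction w using DirectSum.Decomposition.inductionOn 𝒜 with
  | zero => exact zero_mem _
  | homogeneous w => exact Submodule.subset_span ⟨_, w.2⟩
  | add a b ha hb => exact add_mem (ha trivial) (hb trivial)

/-- The matrices whose entries all lie in `𝒜 d`; they form the degree `d` part of the grading that
`𝒜` induces on matrices. -/
def homogeneousMatrices {n : Type*} (𝒜 : ℕ → σ) (d : ℕ) : AddSubmonoid (Matrix n n E) :=
  (AddSubmonoid.ofClass (𝒜 d)).matrix

variable {n : Type*} {𝒜 : ℕ → σ}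

theorem smul_unitalSingle_mem_homogeneousMatrices [DecidableEq n] {d : ℕ} {w : E} (hw : w ∈ 𝒜 d)
    (o : n) (p : n × n) : w • unitalSingle E o p ∈ homogeneousMatrices 𝒜 d := by
  intro i j
  have entry_eq : (w • unitalSingle E o p) i j = 0 ∨ (w • unitalSingle E o p) i j = w := by
    simp only [unitalSingle, Matrix.smul_apply, smul_eq_mul]
    split_ifs
    · rw [Matrix.one_apply]
      split_ifs <;> simp
    · rw [Matrix.single_apply]
      split_ifs <;> simp
  rcases entry_eq with h | h <;> rw [h]
  exacts [zero_mem _, hw]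

theorem trace_mul_comm_of_odd_degree [Fintype n]
    (heven : ∀ d, Even d → ∀ x ∈ 𝒜 d, x ∈ Subring.center E) {a b : ℕ} (hab : Odd (a + b))
    {X Y : Matrix n n E} (hX : X ∈ homogeneousMatrices 𝒜 a)
    (hY : Y ∈ homogeneousMatrices 𝒜 b) :
    (X * Y).trace = (Y * X).trace := by
  refine trace_mul_comm_of_forall_commute fun i j => ?_
  rcases Nat.even_or_odd a with ha | ha
  · exact (Subring.mem_center_iff.1 (heven a ha _ (hX i j)) _).symm
  · exact Subring.mem_center_iff.1 (heven b ((Nat.odd_add.1 hab).1 ha) _ (hY j i)) _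

variable [Fintype n] [DecidableEq n] [SetLike.GradedMonoid 𝒜] {k : ℕ}

instance : SetLike.GradedMonoid (homogeneousMatrices (n := n) 𝒜) where
  one_mem i j := by
    rw [Matrix.one_apply]
    split_ifs
    exacts [SetLike.one_mem_graded 𝒜, zero_mem _]
  mul_mem _ _ _ _ hX hY i j := by
    rw [Matrix.mul_apply]
    exact sum_mem fun l _ => SetLike.mul_mem_graded (hX i l) (hY l j)

theorem prod_ofFn_mem_homogeneousMatrices {d : Fin k → ℕ} {A : Fin k → Matrix n n E}
    (hA : ∀ i, A i ∈ homogeneousMatrices 𝒜 (d i)) :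
    (List.ofFn A).prod ∈ homogeneousMatrices 𝒜 (∑ i, d i) := by
  rw [← List.sum_ofFn]
  exact SetLike.list_prod_ofFn_mem_graded (A := homogeneousMatrices 𝒜) d A hA

theorem standardPoly_eq_zero_of_degree_lt {m : ℕ} (hvanish : ∀ d, m < d → ∀ x ∈ 𝒜 d, x = 0)
    {d : Fin k → ℕ} (hd : m < ∑ i, d i) {A : Fin k → Matrix n n E}
    (hA : ∀ i, A i ∈ homogeneousMatrices 𝒜 (d i)) : standardPoly A = 0 := by
  refine sum_eq_zero fun π _ => ?_
  have hprod : (List.ofFn fun i => A (π i)).prod ∈ homogeneousMatrices 𝒜 (∑ i, d i) :=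
    Equiv.sum_comp π d ▸ prod_ofFn_mem_homogeneousMatrices fun i => hA (π i)
  have hzero : (List.ofFn fun i => A (π i)).prod = 0 :=
    Matrix.ext fun i j => hvanish _ hd _ (hprod i j)
  rw [hzero, smul_zero]

variable (heven : ∀ d, Even d → ∀ x ∈ 𝒜 d, x ∈ Subring.center E)
include heven

theorem trace_prod_ofFn_comp_finRotate {d : Fin k → ℕ} (hd : Odd (∑ i, d i))
    {A : Fin k → Matrix n n E} (hA : ∀ i, A i ∈ homogeneousMatrices 𝒜 (d i)) :
    (List.ofFn (A ∘ finRotate k)).prod.trace = (List.ofFn A).prod.trace := by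
  cases k with
  | zero => rfl
  | succ k =>
    have htail := prod_ofFn_mem_homogeneousMatrices fun i : Fin k => hA i.succ
    have hsum : Odd (∑ i : Fin k, d i.succ + d 0) := by rwa [add_comm, ← Fin.sum_univ_succ]
    rw [List.ofFn_succ', List.concat_eq_append, List.prod_append, List.prod_singleton,
      List.ofFn_succ, List.prod_cons, ← trace_mul_comm_of_odd_degree heven hsum htail (hA 0)]
    simp only [Function.comp_apply, finRotate_apply, Fin.coeSucc_eq_succ, Fin.last_add_one]

theorem trace_standardPoly_eq_zero (hk : Even k) {d : Fin k → ℕ} (hd : Odd (∑ i, d i))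
    {A : Fin k → Matrix n n E} (hA : ∀ i, A i ∈ homogeneousMatrices 𝒜 (d i)) :
    (standardPoly A).trace = 0 := by
  obtain _ | k := k
  · simp at hd
  simp only [standardPoly, Matrix.trace_sum, Matrix.trace_smul]
  refine sum_perm_eq_zero_of_even hk _ 0 fun p q hpq => ⟨finRotate (k + 1), ?_, fun π _ => ?_⟩
  · ext
    rw [finRotate_apply, Fin.val_add_one_of_lt' (by omega), hpq]
  · have hodd : Odd k := by simpa [Nat.even_add_one] using hk
    have hrot := trace_prod_ofFn_comp_finRotate heven (A := A ∘ π) (d := d ∘ π)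
      (by simpa [Equiv.sum_comp π d] using hd) fun i => hA (π i)
    rw [Perm.sign_mul, sign_finRotate, Nat.add_sub_cancel, hodd.neg_one_pow, mul_neg_one,
      Units.val_neg, neg_smul]
    exact congrArg (fun x => -((Perm.sign π : ℤ) • x)) hrot

theorem trace_mul_standardPoly_eq_zero (hk : Even k) {e : ℕ} {d : Fin k → ℕ}
    (hd : Odd (e + ∑ i, d i)) {A : Fin k → Matrix n n E}
    (hA : ∀ i, A i ∈ homogeneousMatrices 𝒜 (d i)) {b : Matrix n n E}
    (hb : b ∈ homogeneousMatrices 𝒜 e) {i : Fin k} {c : Subring.center E} (hi : A i = c • b) :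
    (b * standardPoly A).trace = 0 := by
  let B : Fin (k + 1) → Matrix n n E := Fin.cons b A
  have hB (j : Fin (k + 1)) : B j ∈ homogeneousMatrices 𝒜 ((Fin.cons e d : Fin (k + 1) → ℕ) j) := by
    cases j using Fin.cases
    exacts [hb, hA _]
  let f (π : Perm (Fin (k + 1))) : E := (List.ofFn (B ∘ π)).prod.trace
  have hrot (π : Perm (Fin (k + 1))) : f (π * finRotate (k + 1)) = f π :=
    trace_prod_ofFn_comp_finRotate heven (A := B ∘ π) (d := (Fin.cons e d : _ → ℕ) ∘ π)
      (by simpa [Equiv.sum_comp π (Fin.cons e d : _ → ℕ), Fin.sum_univ_succ] using hd)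
      fun j => hB (π j)
  have hswap (π : Perm (Fin (k + 1))) : f (swap 0 i.succ * π) = f π :=
    congrArg Matrix.trace (multilinearMap_comp_swap_of_eq_smul
      ((MultilinearMap.mkPiAlgebraFin (Subring.center E) (k + 1) (Matrix n n E)).domDomCongr π)
      B (i := 0) (j := i.succ) hi)
  calc (b * standardPoly A).trace
      = ∑ π : Perm (Fin k), (Perm.sign (Perm.decomposeFin.symm (0, π)) : ℤ) •
          f (Perm.decomposeFin.symm (0, π)) := by
        simp [standardPoly, f, B, mul_sum, Matrix.trace_sum, Matrix.trace_smul,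
          Perm.decomposeFin.symm_sign, List.ofFn_succ, -zsmul_eq_mul]
    _ = ∑ π with π 0 = 0, (Perm.sign π : ℤ) • f π :=
        sum_decomposeFin_symm_zero fun π => (Perm.sign π : ℤ) • f π
    _ = 0 := sum_stabilizer_sign_smul_eq_zero hk (Fin.succ_ne_zero i) f hrot hswap

theorem standardPoly_eq_zero_of_forall_exists_eq_smul_unitalSingle (hk : Even k) {d : Fin k → ℕ}
    (hd : Odd (∑ i, d i)) {A : Fin k → Matrix n n E}
    (hA : ∀ i, A i ∈ homogeneousMatrices 𝒜 (d i)) (o : n)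
    (hex : ∀ q ≠ (o, o), ∃ i, ∃ c : Subring.center E, A i = c • unitalSingle E o q) :
    standardPoly A = 0 := by
  refine eq_zero_of_forall_trace_mul_eq_zero (span_range_unitalSingle E o) ?_
  rintro _ ⟨q, rfl⟩
  rcases eq_or_ne q (o, o) with rfl | hq
  · rw [unitalSingle_self, one_mul, trace_standardPoly_eq_zero heven hk hd hA]
  · obtain ⟨i, c, hc⟩ := hex q hq
    refine trace_mul_standardPoly_eq_zero heven hk (e := 0) (by simpa using hd) hA ?_ hc
    simpa using smul_unitalSingle_mem_homogeneousMatrices (SetLike.one_mem_graded 𝒜) o q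

theorem standardPoly_smul_unitalSingle_eq_zero {m : ℕ}
    (hvanish : ∀ d, m < d → ∀ x ∈ 𝒜 d, x = 0) (hk : Even k)
    (hle : 2 * ((Fintype.card n ^ 2 + 1) / 2 + m / 2) ≤ k) (o : n) {d : Fin k → ℕ} {w : Fin k → E}
    (hw : ∀ i, w i ∈ 𝒜 (d i)) (p : Fin k → n × n) :
    standardPoly (fun i => w i • unitalSingle E o (p i)) = 0 := by
  have hA (i : Fin k) := smul_unitalSingle_mem_homogeneousMatrices (hw i) o (p i)
  have hcenter (i : Fin k) (hi : Even (d i)) : w i ∈ Subring.center E := heven _ hi _ (hw i)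
  by_contra hne
  have hdeg : ∑ i, d i ≤ m := by
    by_contra! hlt
    exact hne (standardPoly_eq_zero_of_degree_lt hvanish hlt hA)
  have hcount : k + 1 ≤ Fintype.card n ^ 2 + ∑ i, d i := by
    simpa using card_add_card_insert_le_of_standardPoly_ne_zero hk hcenter hne (t := ∅)
  have hk_mod := Nat.even_iff.1 hk
  -- Together with `hdeg` and `hle` the count forces `∑ i, d i = m`, with `m` odd.
  have hodd : Odd (∑ i, d i) := by rw [Nat.odd_iff]; omega
  have exists_even_eq (q : n × n) (hq : q ≠ (o, o)) : ∃ i, Even (d i) ∧ p i = q := by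
    by_contra! hmiss
    have hcount_insert := card_add_card_insert_le_of_standardPoly_ne_zero hk hcenter hne
      (t := {q}) (by simpa using hmiss)
    rw [card_pair hq.symm] at hcount_insert
    omega
  refine hne (standardPoly_eq_zero_of_forall_exists_eq_smul_unitalSingle heven hk hodd hA o
    fun q hq => ?_)
  obtain ⟨i, hi, rfl⟩ := exists_even_eq q hq
  exact ⟨i, ⟨w i, hcenter i hi⟩, rfl⟩

end Graded

section Exterior

open ExteriorAlgebra

variable {R M : Type*} [CommRing R] [AddCommGroup M] [Module R M] {d : ℕ}

theorem ι_mul_of_mem_exteriorPower (v : M) {x : ExteriorAlgebra R M} (hx : x ∈ ⋀[R]^d M) :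
    ι R v * x = (-1) ^ d * (x * ι R v) := by
  induction hx using Submodule.pow_induction_on_left' with
  | algebraMap r => simp [Algebra.commutes]
  | add x y i _ _ hx hy => simp only [mul_add, add_mul, hx, hy]
  | mem_mul w hw i x _ ih =>
    obtain ⟨w, rfl⟩ := hw
    have hwv : ι R v * ι R w = -(ι R w * ι R v) :=
      eq_neg_of_add_eq_zero_left (ι_add_mul_swap v w)
    have hsign : ι R w * (-1) ^ i = (-1) ^ i * ι R w :=
      ((Commute.neg_one_right (ι R w)).pow_right i).eq
    calc ι R v * (ι R w * x)
      _ = -(ι R w * (ι R v * x)) := by rw [← mul_assoc, hwv, neg_mul, mul_assoc]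
      _ = -((-1) ^ i * (ι R w * x * ι R v)) := by
        rw [ih, ← mul_assoc, hsign, mul_assoc, mul_assoc (ι R w)]
      _ = (-1) ^ (i + 1) * (ι R w * x * ι R v) := by rw [pow_succ, mul_neg_one, neg_mul]

theorem mem_center_of_mem_exteriorPower (hd : Even d) {x : ExteriorAlgebra R M}
    (hx : x ∈ ⋀[R]^d M) : x ∈ Subring.center (ExteriorAlgebra R M) := by
  rw [Subring.mem_center_iff]
  intro y
  induction y using ExteriorAlgebra.induction with
  | algebraMap r => exact Algebra.commutes r x
  | ι v => simpa [hd.neg_one_pow] using ι_mul_of_mem_exteriorPower v hx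
  | mul a b ha hb => rw [mul_assoc, hb, ← mul_assoc, ha, mul_assoc]
  | add a b ha hb => rw [add_mul, mul_add, ha, hb]

theorem exteriorPower_eq_bot_of_card_lt {ι : Type*} [Fintype ι] {v : ι → M}
    (hv : Submodule.span R (Set.range v) = ⊤) (hd : Fintype.card ι < d) : ⋀[R]^d M = ⊥ := by
  classical
  let : LinearOrder ι := linearOrderOfSTO WellOrderingRel
  have : IsEmpty (Set.powersetCard ι d) :=
    ⟨fun s => (card_le_univ s.1).not_gt (hd.trans_eq s.2.symm)⟩
  rw [← exteriorPower.ιMulti_family_span_fixedDegree_of_span R hv, Set.range_eq_empty,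
    Submodule.span_empty]

end Exterior

end StandardIdentity

open StandardIdentity

theorem grassmann_matrix_standard_identity_capelli_bound_general {E σ n : Type*} [Ring E]
    [SetLike σ E] [AddSubmonoidClass σ E] (𝒜 : ℕ → σ) [GradedRing 𝒜] [Fintype n] [DecidableEq n]
    (heven : ∀ d, Even d → ∀ x ∈ 𝒜 d, x ∈ Subring.center E) {m : ℕ}
    (hvanish : ∀ d, m < d → ∀ x ∈ 𝒜 d, x = 0) {k : ℕ} (hk : Even k)
    (hle : 2 * ((Fintype.card n ^ 2 + 1) / 2 + m / 2) ≤ k) (A : Fin k → Matrix n n E) :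
    standardPoly A = 0 := by
  rcases isEmpty_or_nonempty n with _ | ⟨⟨o⟩⟩
  · exact Subsingleton.elim _ _
  open Pointwise in
  have hspan : Submodule.span ℤ ({w : E | SetLike.IsHomogeneousElem 𝒜 w} •
      Set.range (unitalSingle E o)) = ⊤ := by
    rw [Submodule.span_smul_of_span_eq_top (span_int_isHomogeneousElem 𝒜),
      span_range_unitalSingle, Submodule.restrictScalars_top]
  have hzero : (standardAlternatingMap (Matrix n n E) k ℤ).toMultilinearMap = 0 := by
    refine multilinearMap_ext_of_span_eq_top (fun _ => hspan) fun B hB => ?_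
    choose w hw _ hp hB using hB
    choose d hw using hw
    choose p hp using hp
    obtain rfl : (fun i => w i • unitalSingle E o (p i)) = B :=
      funext fun i => (hp i).symm ▸ hB i
    exact (standardAlternatingMap_apply ℤ _).trans
      (standardPoly_smul_unitalSingle_eq_zero heven hvanish hk hle o hw p)
  exact (standardAlternatingMap_apply ℤ A).symm.trans (DFunLike.congr_fun hzero A)

/-- The ring of `n × n` matrices over the Grassmann algebra of rank `m` satisfies the
standard identity of degree `2(⌊(n²+1)/2⌋ + ⌊m/2⌋)`. -/
theorem grassmann_matrix_standard_identity_capelli_bound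
    (R : Type*) [CommRing R] (m n : ℕ) (hn : 1 ≤ n)
    (k : ℕ) (hk : k = 2 * ((n ^ 2 + 1) / 2 + m / 2))
    (A : Fin k → Matrix (Fin n) (Fin n) (ExteriorAlgebra R (Fin m → R))) :
    ∑ π : Equiv.Perm (Fin k),
      (Equiv.Perm.sign π : ℤ) • (List.ofFn fun i => A (π i)).prod = 0 := by
  refine grassmann_matrix_standard_identity_capelli_bound_general
    (fun d : ℕ => ⋀[R]^d (Fin m → R)) (fun d hd x hx => mem_center_of_mem_exteriorPower hd hx)
    (m := m) (fun d hd x hx => ?_) (hk ▸ even_two_mul _) (by simp [hk]) A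
  have hbot := exteriorPower_eq_bot_of_card_lt (Pi.basisFun R (Fin m)).span_eq (by simpa using hd)
  exact (Submodule.mem_bot R).1 (hbot ▸ hx)
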